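/- arXiv:2111.11542 — 2 statements merged into one kernel-verified Lean document; each statement's English description precedes it below -/
import Mathlib

section
/- Let N ≥ D, let X ∈ ℝ^{N×D} have full column rank D, and let A be an invertible D×D matrix. Suppose β : [0,∞) → ℝ^D is a differentiable natural gradient flow trajectory for (X, y), i.e. F_X(β_t) β̇_t = −∇L_X(β_t), and β' : [0,∞) → ℝ^D is a differentiable natural gradient flow trajectory for (XAᵀ, y), i.e. F_{XAᵀ}(β'_t) β̇'_t = −∇L_{XAᵀ}(β'_t). If Aᵀ β'_0 = β_0, then Aᵀ β'_t = β_t for all t ≥ 0. -/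
/-!
For labels `±1` the loss gradient is `Xᵀ r(Xβ)`, where `r(u)ₙ = φ(uₙ) - (1 + yₙ) / 2`; its Jacobian
in `β` is exactly the Fisher matrix. Along a natural gradient flow the chain rule therefore reads
`d/dt ∇L(β_t) = -∇L(β_t)`, so that `∇L(β_t) = exp(-t) ∇L(β_0)`.

Paired with a vector `w`, this says that `⟨r(Xβ_t), Xw⟩` decays exponentially: the orthogonal
projection of the residual onto the column space of `X` is determined by the initial logits. Two
data matrices with the same column space and the same initial logits thus have residuals whose
difference is orthogonal to that space. The difference of the logits lies in the space, and `φ` is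
strictly increasing, so the logits agree at all times. The column space of `XAᵀ` is that of `X`, and
full column rank recovers the parameters from the logits.
-/

open Matrix Set

/-- The logistic sigmoid `φ(u) = 1/(1+exp(-u))`. -/
noncomputable def phi (u : ℝ) : ℝ := 1 / (1 + Real.exp (-u))

/-- Gradient of the logistic loss `L_X(β) = Σ_n log(1+exp(-y_n x_nᵀβ))` of a linear
classifier `β`, namely `∇L_X(β) = -Σ_n y_n (1-φ(y_n x_nᵀβ)) x_n`. -/
noncomputable def gradL {N D : ℕ} (X : Matrix (Fin N) (Fin D) ℝ) (y : Fin N → ℝ)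
    (β : Fin D → ℝ) : Fin D → ℝ :=
  fun d => -∑ n, y n * (1 - phi (y n * ∑ i, X n i * β i)) * X n d

/-- Training-sample Fisher information matrix
`F_X(β) = Xᵀ diag(φ(x_nᵀβ)(1-φ(x_nᵀβ))) X`. -/
noncomputable def fisher {N D : ℕ} (X : Matrix (Fin N) (Fin D) ℝ) (β : Fin D → ℝ) :
    Matrix (Fin D) (Fin D) ℝ :=
  Xᵀ * Matrix.diagonal (fun n => phi ((X *ᵥ β) n) * (1 - phi ((X *ᵥ β) n))) * X

section LinearAlgebra

lemma mulVec_injective_iff_rank_eq_card {m n K : Type*} [Fintype n] [Field K]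
    {A : Matrix m n K} : Function.Injective A.mulVec ↔ A.rank = Fintype.card n := by
  rw [mulVec_injective_iff, linearIndependent_iff_card_eq_finrank_span, Set.finrank,
    ← rank_eq_finrank_span_cols, eq_comm]

lemma range_mulVecLin_mul_of_surjective {l m n R : Type*} [Fintype m] [Fintype n] [CommSemiring R]
    (A : Matrix l m R) {B : Matrix m n R} (hB : Function.Surjective B.mulVec) :
    LinearMap.range (A * B).mulVecLin = LinearMap.range A.mulVecLin := by
  rw [mulVecLin_mul]
  exact LinearMap.range_comp_of_range_eq_top _ (LinearMap.range_eq_top.2 hB)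

lemma eq_of_comp_sub_comp_dotProduct_sub_eq_zero {ι R : Type*} [Fintype ι] [Ring R] [LinearOrder R]
    [IsStrictOrderedRing R] {f : R → R} (hf : StrictMono f) {u v : ι → R}
    (h : (f ∘ u - f ∘ v) ⬝ᵥ (u - v) = 0) : u = v := by
  have hnonneg (i : ι) : 0 ≤ (f (u i) - f (v i)) * (u i - v i) :=
    (hf.monotone.monovary monotone_id).sub_mul_sub_nonneg (v i) (u i)
  funext i
  have hi : (f (u i) - f (v i)) * (u i - v i) = 0 :=
    (Finset.sum_eq_zero_iff_of_nonneg fun i _ ↦ hnonneg i).1 h i (Finset.mem_univ i)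
  rcases mul_eq_zero.1 hi with hfi | hi
  · exact hf.injective (sub_eq_zero.1 hfi)
  · exact sub_eq_zero.1 hi

end LinearAlgebra

section Calculus

lemma hasDerivWithinAt_mulVec {m n 𝕜 : Type*} [Fintype n] [NontriviallyNormedField 𝕜]
    (A : Matrix m n 𝕜) {u : 𝕜 → n → 𝕜} {u' : n → 𝕜} {s : Set 𝕜} {t : 𝕜}
    (hu : HasDerivWithinAt u u' s t) :
    HasDerivWithinAt (fun τ ↦ A *ᵥ u τ) (A *ᵥ u') s t :=
  hasDerivWithinAt_pi.2 fun i ↦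
    HasDerivWithinAt.fun_sum fun j _ ↦ (hasDerivWithinAt_pi.1 hu j).const_mul (A i j)

lemma eq_exp_smul_of_hasDerivWithinAt_neg {E : Type*} [NormedAddCommGroup E] [NormedSpace ℝ E]
    {f : ℝ → E} {s : Set ℝ} (hs : Convex ℝ s) (hf : ∀ t ∈ s, HasDerivWithinAt f (-f t) s t)
    {t₀ t : ℝ} (ht₀ : t₀ ∈ s) (ht : t ∈ s) : f t = Real.exp (t₀ - t) • f t₀ := by
  have hderiv (τ : ℝ) (hτ : τ ∈ s) : HasDerivWithinAt (fun τ ↦ Real.exp τ • f τ) 0 s τ :=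
    ((Real.hasDerivAt_exp τ).hasDerivWithinAt.smul (hf τ hτ)).congr_deriv (by simp)
  have hconst : Real.exp t • f t = Real.exp t₀ • f t₀ := by
    have hle := hs.norm_image_sub_le_of_norm_hasDerivWithin_le (C := 0) hderiv (by simp) ht₀ ht
    simpa [sub_eq_zero] using hle
  rw [sub_eq_neg_add, Real.exp_add, mul_smul, ← hconst, smul_smul, ← Real.exp_add,
    neg_add_cancel, Real.exp_zero, one_smul]

end Calculus

section LogisticLoss

lemma phi_eq_sigmoid : phi = Real.sigmoid :=
  funext fun _ ↦ one_div _

lemma phi_strictMono : StrictMono phi :=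
  phi_eq_sigmoid ▸ Real.sigmoid_strictMono

/-- The gradient of the logistic loss in the logits `u = Xβ`: predicted probability minus the label
recoded from `±1` to `1/0`. -/
noncomputable def logitResidual {ι : Type*} (y u : ι → ℝ) : ι → ℝ :=
  fun i ↦ phi (u i) - (1 + y i) / 2

lemma logitResidual_sub_logitResidual {ι : Type*} (y u v : ι → ℝ) :
    logitResidual y u - logitResidual y v = phi ∘ u - phi ∘ v :=
  funext fun _ ↦ sub_sub_sub_cancel_right _ _ _

lemma hasDerivWithinAt_logitResidual {ι : Type*} [Fintype ι] [DecidableEq ι] (y : ι → ℝ)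
    {u : ℝ → ι → ℝ} {u' : ι → ℝ} {s : Set ℝ} {t : ℝ} (hu : HasDerivWithinAt u u' s t) :
    HasDerivWithinAt (fun τ ↦ logitResidual y (u τ))
      (diagonal (fun i ↦ phi (u t i) * (1 - phi (u t i))) *ᵥ u') s t := by
  refine hasDerivWithinAt_pi.2 fun i ↦ ?_
  simp only [mulVec_diagonal, logitResidual, phi_eq_sigmoid]
  exact ((Real.hasDerivAt_sigmoid _).comp_hasDerivWithinAt t
    (hasDerivWithinAt_pi.1 hu i)).sub_const _

variable {N D : ℕ} (X : Matrix (Fin N) (Fin D) ℝ) {y : Fin N → ℝ}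

lemma gradL_eq_transpose_mulVec_logitResidual (hy : ∀ n, y n = 1 ∨ y n = -1) (b : Fin D → ℝ) :
    gradL X y b = Xᵀ *ᵥ logitResidual y (X *ᵥ b) := by
  have hlabel (n : Fin N) (u : ℝ) : -(y n * (1 - phi (y n * u))) = phi u - (1 + y n) / 2 := by
    rcases hy n with h | h
    · rw [h, one_mul u]
      ring
    · rw [h, neg_one_mul u, phi_eq_sigmoid, Real.sigmoid_neg]
      ring
  funext d
  simp only [gradL, mulVec, dotProduct, transpose_apply, logitResidual, ← hlabel,
    ← Finset.sum_neg_distrib]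
  exact Finset.sum_congr rfl fun n _ ↦ by ring

lemma gradL_dotProduct (hy : ∀ n, y n = 1 ∨ y n = -1) (b w : Fin D → ℝ) :
    gradL X y b ⬝ᵥ w = logitResidual y (X *ᵥ b) ⬝ᵥ X *ᵥ w := by
  rw [gradL_eq_transpose_mulVec_logitResidual X hy, mulVec_transpose, dotProduct_mulVec]

lemma hasDerivWithinAt_gradL (hy : ∀ n, y n = 1 ∨ y n = -1) {β : ℝ → Fin D → ℝ} {v : Fin D → ℝ}
    {s : Set ℝ} {t : ℝ} (hβ : HasDerivWithinAt β v s t) :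
    HasDerivWithinAt (fun τ ↦ gradL X y (β τ)) (fisher X (β t) *ᵥ v) s t := by
  simp only [gradL_eq_transpose_mulVec_logitResidual X hy, fisher, ← mulVec_mulVec]
  exact hasDerivWithinAt_mulVec Xᵀ
    (hasDerivWithinAt_logitResidual y (hasDerivWithinAt_mulVec X hβ))

end LogisticLoss

/-- Natural gradient flow for the data `(X, y)` on a set of times `s`. The flow equation is kept in
its implicit form, without inverting the Fisher matrix, so it makes sense for `X` of any rank. -/
def IsNaturalGradientFlowOn {N D : ℕ} (X : Matrix (Fin N) (Fin D) ℝ) (y : Fin N → ℝ)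
    (β : ℝ → Fin D → ℝ) (s : Set ℝ) : Prop :=
  ∀ t ∈ s, ∃ v, HasDerivWithinAt β v s t ∧ fisher X (β t) *ᵥ v = -gradL X y (β t)

section NaturalGradientFlow

variable {N D E : ℕ} {X : Matrix (Fin N) (Fin D) ℝ} {Z : Matrix (Fin N) (Fin E) ℝ} {y : Fin N → ℝ}
  {β : ℝ → Fin D → ℝ} {γ : ℝ → Fin E → ℝ} {s : Set ℝ} {t₀ t : ℝ}

namespace IsNaturalGradientFlowOn

lemma gradL_eq_exp_smul (hβ : IsNaturalGradientFlowOn X y β s) (hy : ∀ n, y n = 1 ∨ y n = -1)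
    (hs : Convex ℝ s) (ht₀ : t₀ ∈ s) (ht : t ∈ s) :
    gradL X y (β t) = Real.exp (t₀ - t) • gradL X y (β t₀) := by
  refine eq_exp_smul_of_hasDerivWithinAt_neg (f := fun τ ↦ gradL X y (β τ)) hs
    (fun τ hτ ↦ ?_) ht₀ ht
  obtain ⟨v, hv, hflow⟩ := hβ τ hτ
  exact (hasDerivWithinAt_gradL X hy hv).congr_deriv hflow

lemma logitResidual_dotProduct_eq_exp_mul (hβ : IsNaturalGradientFlowOn X y β s)
    (hy : ∀ n, y n = 1 ∨ y n = -1) (hs : Convex ℝ s) (ht₀ : t₀ ∈ s) (ht : t ∈ s)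
    {u : Fin N → ℝ} (hu : u ∈ LinearMap.range X.mulVecLin) :
    logitResidual y (X *ᵥ β t) ⬝ᵥ u =
      Real.exp (t₀ - t) * (logitResidual y (X *ᵥ β t₀) ⬝ᵥ u) := by
  obtain ⟨w, rfl⟩ := hu
  rw [mulVecLin_apply, ← gradL_dotProduct X hy, ← gradL_dotProduct X hy,
    hβ.gradL_eq_exp_smul hy hs ht₀ ht, smul_dotProduct, smul_eq_mul]

end IsNaturalGradientFlowOn

theorem ngf_parameter_invariance_overdetermined_general
    (hXZ : LinearMap.range X.mulVecLin = LinearMap.range Z.mulVecLin)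
    (hy : ∀ n, y n = 1 ∨ y n = -1) (hs : Convex ℝ s)
    (hβ : IsNaturalGradientFlowOn X y β s) (hγ : IsNaturalGradientFlowOn Z y γ s)
    (ht₀ : t₀ ∈ s) (hinit : X *ᵥ β t₀ = Z *ᵥ γ t₀) (ht : t ∈ s) : X *ᵥ β t = Z *ᵥ γ t := by
  have hmem : X *ᵥ β t - Z *ᵥ γ t ∈ LinearMap.range X.mulVecLin :=
    Submodule.sub_mem _ ⟨β t, rfl⟩ (hXZ ▸ ⟨γ t, rfl⟩)
  refine eq_of_comp_sub_comp_dotProduct_sub_eq_zero phi_strictMono ?_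
  rw [← logitResidual_sub_logitResidual y, sub_dotProduct,
    hβ.logitResidual_dotProduct_eq_exp_mul hy hs ht₀ ht hmem,
    hγ.logitResidual_dotProduct_eq_exp_mul hy hs ht₀ ht (hXZ ▸ hmem), hinit, sub_self]

end NaturalGradientFlow

/-- **Theorem 2**: with `N ≥ D` and `X` of full column rank `D`, natural gradient flow on
the logistic loss satisfies `Aᵀ β'_t = β_t` where `β'` is the NGF trajectory on the
transformed data `XAᵀ`. -/
theorem ngf_parameter_invariance_overdetermined {N D : ℕ} (hND : D ≤ N)
    (X : Matrix (Fin N) (Fin D) ℝ) (hX : X.rank = D)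
    (A : Matrix (Fin D) (Fin D) ℝ) (hA : IsUnit A)
    (y : Fin N → ℝ) (hy : ∀ n, y n = 1 ∨ y n = -1)
    (β β' dβ dβ' : ℝ → Fin D → ℝ)
    (hβdiff : ∀ t ∈ Ici (0:ℝ), HasDerivWithinAt β (dβ t) (Ici 0) t)
    (hβ'diff : ∀ t ∈ Ici (0:ℝ), HasDerivWithinAt β' (dβ' t) (Ici 0) t)
    (hflow : ∀ t ∈ Ici (0:ℝ), fisher X (β t) *ᵥ dβ t = -gradL X y (β t))
    (hflow' : ∀ t ∈ Ici (0:ℝ),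
      fisher (X * Aᵀ) (β' t) *ᵥ dβ' t = -gradL (X * Aᵀ) y (β' t))
    (hinit : Aᵀ *ᵥ β' 0 = β 0) :
    ∀ t ∈ Ici (0:ℝ), Aᵀ *ᵥ β' t = β t := by
  intro t ht
  have hX_inj : Function.Injective X.mulVec :=
    mulVec_injective_iff_rank_eq_card.2 (hX.trans (Fintype.card_fin D).symm)
  have hrange : LinearMap.range (X * Aᵀ).mulVecLin = LinearMap.range X.mulVecLin :=
    range_mulVecLin_mul_of_surjective X (mulVec_surjective_iff_isUnit.2 ((isUnit_transpose A).2 hA))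
  have hflow_β : IsNaturalGradientFlowOn X y β (Ici 0) :=
    fun τ hτ ↦ ⟨dβ τ, hβdiff τ hτ, hflow τ hτ⟩
  have hflow_β' : IsNaturalGradientFlowOn (X * Aᵀ) y β' (Ici 0) :=
    fun τ hτ ↦ ⟨dβ' τ, hβ'diff τ hτ, hflow' τ hτ⟩
  have hinit_logits : (X * Aᵀ) *ᵥ β' 0 = X *ᵥ β 0 := by rw [← mulVec_mulVec, hinit]
  have hlogits : (X * Aᵀ) *ᵥ β' t = X *ᵥ β t :=
    ngf_parameter_invariance_overdetermined_general hrange hy (convex_Ici 0) hflow_β' hflow_β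
      self_mem_Ici hinit_logits ht
  exact hX_inj (by rw [mulVec_mulVec, hlogits])
end

section
/- Let a ∈ ℝ and let s : (a, ∞) → ℝ be differentiable with s'(t) = 1 + exp(−s(t)) for all t > a. Then s(t)/t → 1 as t → ∞. -/
/-!
Writing the equation as `s' = (sigmoid s)⁻¹` and separating variables with the antiderivative
`x ↦ log (1 + exp x)` of the sigmoid gives `log (1 + exp (s t)) = t + c`, so
`s t = log (exp (t + c) - 1)`. Hence `s t - t` converges to `c`, which forces `s t / t → 1`.
-/

open Filter

open Asymptotics Topology

theorem isEquivalent_of_sub_isBigO_one {α E : Type*} [NormedAddCommGroup E] {l : Filter α}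
    {f g : α → E} (hfg : (f - g) =O[l] (fun _ => (1 : ℝ)))
    (hg : Tendsto (fun x => ‖g x‖) l atTop) : f ~[l] g :=
  hfg.trans_isLittleO (isLittleO_const_left.2 (Or.inr hg))

theorem exists_eq_add_const_of_hasDerivAt_inv {𝕜 : Type*} [RCLike 𝕜] {U : Set 𝕜}
    {s h H : 𝕜 → 𝕜} (hUo : IsOpen U) (hUc : IsPreconnected U)
    (hs : ∀ t ∈ U, HasDerivAt s (h (s t))⁻¹ t)
    (hH : ∀ t ∈ U, HasDerivAt H (h (s t)) (s t)) (h_ne : ∀ t ∈ U, h (s t) ≠ 0) :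
    ∃ c, ∀ t ∈ U, H (s t) = t + c := by
  have hderiv : ∀ t ∈ U, HasDerivAt (fun u => H (s u) - u) 0 t := fun t ht =>
    (((hH t ht).comp t (hs t ht)).sub (hasDerivAt_id t)).congr_deriv <| by
      rw [mul_inv_cancel₀ (h_ne t ht), sub_self]
  obtain ⟨c, hc⟩ := hUo.exists_is_const_of_deriv_eq_zero hUc
    (fun t ht => (hderiv t ht).differentiableAt.differentiableWithinAt)
    (fun t ht => (hderiv t ht).deriv)
  exact ⟨c, fun t ht => sub_eq_iff_eq_add'.1 (hc t ht)⟩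

theorem hasDerivAt_log_one_add_exp (x : ℝ) :
    HasDerivAt (fun y => Real.log (1 + Real.exp y)) (Real.sigmoid x) x := by
  have hpos : 0 < 1 + Real.exp x := by positivity
  refine (((Real.hasDerivAt_exp x).const_add 1).log hpos.ne').congr_deriv ?_
  rw [Real.sigmoid_def, Real.exp_neg]
  field_simp
  ring

theorem tendsto_log_exp_add_sub_self (b : ℝ) :
    Tendsto (fun x => Real.log (Real.exp x + b) - x) atTop (𝓝 0) := by
  simpa only [Function.comp_def, Real.log_exp] using
    (Real.tendsto_log_comp_add_sub_log b).comp Real.tendsto_exp_atTop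

section LogisticODE

variable {s : ℝ → ℝ}

theorem exists_one_add_exp_eq_exp_add_of_hasDerivAt {U : Set ℝ} (hUo : IsOpen U)
    (hUc : IsPreconnected U) (hs : ∀ t ∈ U, HasDerivAt s (1 + Real.exp (-s t)) t) :
    ∃ c, ∀ t ∈ U, 1 + Real.exp (s t) = Real.exp (t + c) := by
  have hs_sigmoid : ∀ t ∈ U, HasDerivAt s (Real.sigmoid (s t))⁻¹ t := fun t ht => by
    simpa only [Real.sigmoid_def, inv_inv] using hs t ht
  obtain ⟨c, hc⟩ := exists_eq_add_const_of_hasDerivAt_inv hUo hUc hs_sigmoid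
    (fun t _ => hasDerivAt_log_one_add_exp (s t)) (fun t _ => (Real.sigmoid_pos (s t)).ne')
  exact ⟨c, fun t ht => by rw [← hc t ht, Real.exp_log (by positivity)]⟩

theorem exists_tendsto_sub_self_of_hasDerivAt {a : ℝ}
    (hs : ∀ t ∈ Set.Ioi a, HasDerivAt s (1 + Real.exp (-s t)) t) :
    ∃ c, Tendsto (fun t => s t - t) atTop (𝓝 c) := by
  obtain ⟨c, hc⟩ := exists_one_add_exp_eq_exp_add_of_hasDerivAt isOpen_Ioi
    isPreconnected_Ioi hs
  have hlog : ∀ t ∈ Set.Ioi a, s t = Real.log (Real.exp (t + c) + -1) := fun t ht => by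
    rw [← hc t ht, add_neg_cancel_comm, Real.log_exp]
  have hlim : Tendsto (fun t => Real.log (Real.exp (t + c) + -1) - (t + c) + c) atTop (𝓝 c) := by
    simpa only [Function.comp_def, id_eq, zero_add] using
      ((tendsto_log_exp_add_sub_self (-1)).comp
        (tendsto_atTop_add_const_right atTop c tendsto_id)).add_const c
  refine ⟨c, hlim.congr' ?_⟩
  filter_upwards [Ioi_mem_atTop a] with t ht
  rw [hlog t ht]
  ring

end LogisticODE

/-- The solution of the scalar ODE `s' = 1 + exp(-s)` arising from natural gradient flow
on the logistic loss for a single data point with label `+1` grows asymptotically like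
`t`: `s(t)/t → 1` as `t → ∞`. -/
theorem ngf_scalar_ode_asymptotics (a : ℝ) (s : ℝ → ℝ)
    (hs : ∀ t ∈ Set.Ioi a, HasDerivAt s (1 + Real.exp (-s t)) t) :
    Tendsto (fun t => s t / t) atTop (nhds 1) := by
  obtain ⟨c, hc⟩ := exists_tendsto_sub_self_of_hasDerivAt hs
  have hequiv : s ~[atTop] id :=
    isEquivalent_of_sub_isBigO_one (hc.isBigO_one ℝ) tendsto_norm_atTop_atTop
  exact (isEquivalent_iff_tendsto_one (eventually_ne_atTop 0)).1 hequiv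
end
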